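/- arXiv:2507.08353 — 2 statements merged into one kernel-verified Lean document; each statement's English description precedes it below -/
import Mathlib

section
/- If F is a V3-saturated family of subsets of [n], then there exists an inclusion-minimal element S ∈ F with |S| ≥ n − |F|. -/
open Finset

variable {n : ℕ}

/-- Two sets are incomparable under inclusion. -/
def Incomp (A B : Finset (Fin n)) : Prop := ¬ A ⊆ B ∧ ¬ B ⊆ A

/-- `A, B1, B2, B3` form an induced copy of `V3`: `A` strictly below three
pairwise incomparable sets. -/
def IsV3Copy (A B1 B2 B3 : Finset (Fin n)) : Prop :=
  A ⊂ B1 ∧ A ⊂ B2 ∧ A ⊂ B3 ∧ Incomp B1 B2 ∧ Incomp B1 B3 ∧ Incomp B2 B3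

def V3Free (F : Finset (Finset (Fin n))) : Prop :=
  ¬ ∃ A ∈ F, ∃ B1 ∈ F, ∃ B2 ∈ F, ∃ B3 ∈ F, IsV3Copy A B1 B2 B3

def V3Saturated (F : Finset (Finset (Fin n))) : Prop :=
  V3Free F ∧ ∀ S : Finset (Fin n), S ∉ F → ¬ V3Free (insert S F)

/-- `X` covers `Y` in `F`. -/
def Covers (F : Finset (Finset (Fin n))) (X Y : Finset (Fin n)) : Prop :=
  Y ⊂ X ∧ ∀ Z ∈ F, Y ⊆ Z → Z ⊆ X → Z = Y ∨ Z = X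

/-- `(A,B,C) ∈ Θ_{X,Y}`: the induced order on `{A,B,C,X,Y}` is exactly
`A ⊊ Y ⊊ X`, `A ⊊ B ⊊ X`, `Y ⊊ C`, with `B ∥ Y`, `B ∥ C`, `C ∥ X`. -/
def Theta (X Y A B C : Finset (Fin n)) : Prop :=
  A ⊂ Y ∧ A ⊂ B ∧ Y ⊂ X ∧ B ⊂ X ∧ Y ⊂ C ∧ Incomp B Y ∧ Incomp B C ∧ Incomp C X

theorem Incomp.symm' {A B : Finset (Fin n)} (h : Incomp A B) : Incomp B A := ⟨h.2, h.1⟩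

theorem Incomp.ne' {A B : Finset (Fin n)} (h : Incomp A B) : A ≠ B := by
  rintro rfl
  exact h.1 (Finset.Subset.refl _)

/-- Family with an edge in every direction `j ∈ D` has at least `|D|` members. -/
theorem card_le_of_edges (D : Finset (Fin n)) : ∀ F : Finset (Finset (Fin n)),
    (∀ j ∈ D, ∃ P ∈ F, j ∉ P ∧ insert j P ∈ F) → D.card ≤ F.card := by
  induction D using Finset.induction_on with
  | empty => intro F _; simp
  | insert j D hj ih =>
    intro F h
    have h1 := ih (F.image (fun P => P.erase j)) (by
      intro i hi
      have hij : i ≠ j := by rintro rfl; exact hj hi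
      obtain ⟨P, hP, hiP, hP'⟩ := h i (Finset.mem_insert_of_mem hi)
      refine ⟨P.erase j, Finset.mem_image_of_mem _ hP, fun hh => hiP (Finset.mem_of_mem_erase hh), ?_⟩
      rw [← Finset.erase_insert_of_ne hij]
      exact Finset.mem_image_of_mem (fun P => P.erase j) hP')
    obtain ⟨P, hP, hjP, hP'⟩ := h j (Finset.mem_insert_self _ _)
    have h2 : (F.image (fun P => P.erase j)).card < F.card := by
      refine lt_of_le_of_ne Finset.card_image_le fun he => ?_
      have hinj := Finset.card_image_iff.mp he
      have := hinj hP hP' (by simp [Finset.erase_eq_of_notMem hjP])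
      exact hjP (this ▸ Finset.mem_insert_self j P)
    rw [Finset.card_insert_of_notMem hj]
    omega

theorem witness {F : Finset (Finset (Fin n))} (hF : V3Saturated F) {Z Y : Finset (Fin n)}
    (hZ : Z ∉ F) (hY : Y ∈ F) (hYZ : Y ⊂ Z) :
    ∃ A ∈ F, ∃ B ∈ F, ∃ C ∈ F, A ⊂ Z ∧ A ⊂ B ∧ A ⊂ C ∧ Incomp Z B ∧ Incomp Z C ∧ Incomp B C := by
  have h := hF.2 Z hZ
  unfold V3Free at h
  rw [not_not] at h
  obtain ⟨A, hA, B1, h1, B2, h2, B3, h3, a1, a2, a3, i12, i13, i23⟩ := h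
  rw [Finset.mem_insert] at hA h1 h2 h3
  rcases hA with rfl | hA
  · exact absurd ⟨Y, hY, B1, h1.resolve_left a1.ne', B2, h2.resolve_left a2.ne',
      B3, h3.resolve_left a3.ne', hYZ.trans a1, hYZ.trans a2, hYZ.trans a3, i12, i13, i23⟩ hF.1
  rcases h1 with rfl | h1
  · exact ⟨A, hA, B2, h2.resolve_left i12.ne'.symm, B3, h3.resolve_left i13.ne'.symm,
      a1, a2, a3, i12, i13, i23⟩
  rcases h2 with rfl | h2
  · exact ⟨A, hA, B1, h1, B3, h3.resolve_left i23.ne'.symm,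
      a2, a1, a3, i12.symm', i23, i13⟩
  rcases h3 with rfl | h3
  · exact ⟨A, hA, B1, h1, B2, h2, a3, a1, a2, i13.symm', i23.symm', i12⟩
  exact absurd ⟨A, hA, B1, h1, B2, h2, B3, h3, a1, a2, a3, i12, i13, i23⟩ hF.1

theorem univ_mem_of_sat {F : Finset (Finset (Fin n))} (hF : V3Saturated F) :
    (Finset.univ : Finset (Fin n)) ∈ F := by
  by_contra hU
  have h := hF.2 _ hU
  unfold V3Free at h
  rw [not_not] at h
  obtain ⟨A, hA, B1, h1, B2, h2, B3, h3, a1, a2, a3, i12, i13, i23⟩ := h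
  rw [Finset.mem_insert] at hA h1 h2 h3
  refine hF.1 ⟨A, hA.resolve_left ?_, B1, h1.resolve_left ?_, B2, h2.resolve_left ?_,
    B3, h3.resolve_left ?_, a1, a2, a3, i12, i13, i23⟩
  · rintro rfl; exact a1.2 (Finset.subset_univ _)
  · rintro rfl; exact i12.2 (Finset.subset_univ _)
  · rintro rfl; exact i12.1 (Finset.subset_univ _)
  · rintro rfl; exact i13.1 (Finset.subset_univ _)

theorem edge_of_sat {F : Finset (Finset (Fin n))} (hF : V3Saturated F) (j : Fin n) :
    ∀ X : Finset (Fin n), ∀ Y ∈ F, X ∈ F → Y ⊂ X → j ∈ X → j ∉ Y →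
      ∃ P ∈ F, j ∉ P ∧ insert j P ∈ F := by
  intro X
  induction X using Finset.strongInduction with
  | H X ih =>
    intro Y hY hX hYX hjX hjY
    by_cases hZ : X.erase j ∈ F
    · exact ⟨_, hZ, Finset.notMem_erase _ _, by rwa [Finset.insert_erase hjX]⟩
    have hYZ : Y ⊂ X.erase j := by
      refine Finset.ssubset_iff_subset_ne.mpr ⟨Finset.subset_erase.mpr ⟨hYX.1, hjY⟩, ?_⟩
      rintro rfl
      exact hZ hY
    have hZX : X.erase j ⊆ X := Finset.erase_subset _ _
    -- finishing step
    have fin : ∀ A ∈ F, ∀ B ∈ F, A ⊂ X.erase j → A ⊂ B → Incomp (X.erase j) B → B ⊆ X →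
        ∃ P ∈ F, j ∉ P ∧ insert j P ∈ F := by
      intro A hA B hB hAZ hAB hi hBX
      have hjB : j ∈ B := by
        by_contra hjB
        exact hi.2 (Finset.subset_erase.mpr ⟨hBX, hjB⟩)
      have hBX' : B ⊂ X := by
        refine Finset.ssubset_iff_subset_ne.mpr ⟨hBX, ?_⟩
        rintro rfl
        exact hi.1 hZX
      exact ih B hBX' A hA hB hAB hjB fun hjA => Finset.notMem_erase j X (hAZ.1 hjA)
    obtain ⟨A, hA, B, hB, C, hC, aZ, aB, aC, iB, iC, iBC⟩ := witness hF hZ hY hYZ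
    by_cases hBX : B ⊆ X
    · exact fin A hA B hB aZ aB iB hBX
    by_cases hCX : C ⊆ X
    · exact fin A hA C hC aZ aC iC hCX
    exact absurd ⟨A, hA, X, hX, B, hB, C, hC, lt_of_lt_of_le aZ hZX, aB, aC,
      ⟨fun h => iB.1 (hZX.trans h), hBX⟩, ⟨fun h => iC.1 (hZX.trans h), hCX⟩, iBC⟩ hF.1

theorem stmt_8 (n : ℕ) (F : Finset (Finset (Fin n))) (hF : V3Saturated F) :
    ∃ S ∈ F, (∀ T ∈ F, ¬ T ⊂ S) ∧ n - F.card ≤ S.card := by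
  have hU := univ_mem_of_sat hF
  obtain ⟨S, hS⟩ := F.exists_minimal ⟨_, hU⟩
  refine ⟨S, hS.1, fun T hT hTS => hTS.2 (hS.2 hT hTS.1), ?_⟩
  have h := card_le_of_edges Sᶜ F (by
    intro j hj
    rw [Finset.mem_compl] at hj
    refine edge_of_sat hF j _ S hS.1 hU ?_ (Finset.mem_univ _) hj
    exact ⟨Finset.subset_univ _, fun h => hj (h (Finset.mem_univ _))⟩)
  rw [Finset.card_compl, Fintype.card_fin] at h
  omega
end

section
/- Every V3-saturated family F of subsets of [n] satisfies |F| ≥ n/2. In particular, sat*(n, V3) ≥ n/2. -/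
open Finset

variable {n : ℕ}

theorem incomp_symm' {n : ℕ} {A B : Finset (Fin n)} (h : Incomp A B) : Incomp B A := ⟨h.2, h.1⟩

/-- Adding a set to a free family: the new set is the bottom or (wlog) the first top. -/
theorem new_copy {n : ℕ} {F : Finset (Finset (Fin n))} (hF : V3Free F) (S : Finset (Fin n))
    (h : ¬ V3Free (insert S F)) :
    (∃ B1 ∈ F, ∃ B2 ∈ F, ∃ B3 ∈ F, IsV3Copy S B1 B2 B3) ∨
    (∃ A ∈ F, ∃ B ∈ F, ∃ C ∈ F, IsV3Copy A S B C) := by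
  unfold V3Free at h
  rw [not_not] at h
  obtain ⟨A, hA, B1, h1, B2, h2, B3, h3, hc⟩ := h
  obtain ⟨a1, a2, a3, i12, i13, i23⟩ := hc
  have mem : ∀ T, T ∈ insert S F → T ≠ S → T ∈ F := fun T hT hne =>
    (Finset.mem_insert.1 hT).resolve_left hne
  have ne_of_incomp : ∀ X Y : Finset (Fin n), Incomp X Y → X ≠ Y := by
    intro X Y hXY e
    subst e
    exact hXY.1 (Finset.Subset.refl _)
  by_cases eA : A = S
  · subst eA
    exact Or.inl ⟨B1, mem _ h1 a1.ne', B2, mem _ h2 a2.ne', B3, mem _ h3 a3.ne',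
      a1, a2, a3, i12, i13, i23⟩
  · have hA' := mem _ hA eA
    right
    by_cases e1 : B1 = S
    · subst e1
      exact ⟨A, hA', B2, mem _ h2 (ne_of_incomp _ _ i12).symm, B3,
        mem _ h3 (ne_of_incomp _ _ i13).symm, a1, a2, a3, i12, i13, i23⟩
    by_cases e2 : B2 = S
    · subst e2
      exact ⟨A, hA', B1, mem _ h1 e1, B3,
        mem _ h3 (ne_of_incomp _ _ i23).symm, a2, a1, a3, incomp_symm' i12, i23, i13⟩
    by_cases e3 : B3 = S
    · subst e3
      exact ⟨A, hA', B1, mem _ h1 e1, B2, mem _ h2 e2,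
        a3, a1, a2, incomp_symm' i13, incomp_symm' i23, i12⟩
    exact absurd ⟨A, hA', B1, mem _ h1 e1, B2, mem _ h2 e2, B3, mem _ h3 e3,
      a1, a2, a3, i12, i13, i23⟩ hF

/-- Three pairwise incomparable members weakly above a member are impossible. -/
theorem no_three {n : ℕ} {F : Finset (Finset (Fin n))} (hF : V3Free F)
    {M B C D : Finset (Fin n)} (hM : M ∈ F) (hB : B ∈ F) (hC : C ∈ F) (hD : D ∈ F)
    (mB : M ⊆ B) (mC : M ⊆ C) (mD : M ⊆ D)
    (h1 : Incomp B C) (h2 : Incomp B D) (h3 : Incomp C D) : False := by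
  have s : ∀ X Y : Finset (Fin n), M ⊆ X → M ⊆ Y → Incomp X Y → M ⊂ X := by
    intro X Y hX hY hi
    refine Finset.ssubset_iff_subset_ne.2 ⟨hX, ?_⟩
    intro e
    exact hi.1 (e ▸ hY)
  exact hF ⟨M, hM, B, hB, C, hC, D, hD, s B C mB mC h1, s C D mC mD h3,
    s D B mD mB (incomp_symm' h2), h1, h2, h3⟩

/-- `Y` is a member of `F` avoiding `i`, maximal with this property. -/
def MaxAvoid {n : ℕ} (F : Finset (Finset (Fin n))) (i : Fin n) (Y : Finset (Fin n)) : Prop :=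
  Y ∈ F ∧ i ∉ Y ∧ ∀ Z ∈ F, Y ⊂ Z → i ∈ Z

theorem exists_maxAvoid {n : ℕ} {F : Finset (Finset (Fin n))} {i : Fin n} {B : Finset (Fin n)}
    (hB : B ∈ F) (hi : i ∉ B) : ∃ Y, B ⊆ Y ∧ MaxAvoid F i Y := by
  obtain ⟨Y, hBY, hY⟩ := (F.filter (fun Z => i ∉ Z)).exists_le_maximal
    (Finset.mem_filter.2 ⟨hB, hi⟩)
  have hm := Finset.mem_filter.1 hY.1
  refine ⟨Y, hBY, hm.1, hm.2, ?_⟩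
  intro Z hZ hYZ
  by_contra hiZ
  exact hYZ.2 (hY.2 (Finset.mem_filter.2 ⟨hZ, hiZ⟩) hYZ.1)

/-- Elements of a minimal member. -/
theorem inside {n : ℕ} {F : Finset (Finset (Fin n))} (hF : V3Saturated F)
    {M : Finset (Fin n)} (hM : M ∈ F) (hmin : ∀ Z ∈ F, ¬ Z ⊂ M) {k : Fin n} (hk : k ∈ M) :
    ∃ Y, M.erase k ⊆ Y ∧ MaxAvoid F k Y := by
  have hss : M.erase k ⊂ M := Finset.erase_ssubset hk
  have hS : M.erase k ∉ F := fun h => hmin _ h hss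
  suffices h : ∃ B ∈ F, M.erase k ⊆ B ∧ k ∉ B by
    obtain ⟨B, hB, hs, hkB⟩ := h
    obtain ⟨Y, hBY, hY⟩ := exists_maxAvoid hB hkB
    exact ⟨Y, hs.trans hBY, hY⟩
  rcases new_copy hF.1 _ (hF.2 _ hS) with h | h
  · obtain ⟨B, hB, C, hC, D, hD, b, c, d, i1, i2, i3⟩ := h
    by_contra! hno
    have up : ∀ X ∈ F, M.erase k ⊆ X → M ⊆ X := by
      intro X hX hs x hx
      by_cases e : x = k
      · rw [e]
        exact hno X hX hs
      · exact hs (Finset.mem_erase.2 ⟨e, hx⟩)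
    exact no_three hF.1 hM hB hC hD (up B hB b.1) (up C hC c.1) (up D hD d.1) i1 i2 i3
  · obtain ⟨A, hA, B, hB, C, hC, a, -⟩ := h
    exact absurd (a.trans hss) (hmin A hA)

/-- Elements outside the member `M`. -/
theorem outside {n : ℕ} {F : Finset (Finset (Fin n))} (hF : V3Saturated F)
    {M : Finset (Fin n)} (hM : M ∈ F) {i : Fin n} (hi : i ∉ M) :
    ∃ A ∈ F, ∃ Y, M ⊆ Y ∧ MaxAvoid F i Y ∧ i ∈ A ∧ A ⊆ insert i Y ∧
      ∀ k ∈ M, ∀ Z, M.erase k ⊆ Z → MaxAvoid F k Z → A ≠ Z := by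
  obtain ⟨Y, hMY, hY⟩ := exists_maxAvoid hM hi
  obtain ⟨hYF, hiY, hmax⟩ := hY
  have hYS : Y ⊆ insert i Y := Finset.subset_insert _ _
  by_cases hS : insert i Y ∈ F
  · refine ⟨insert i Y, hS, Y, hMY, ⟨hYF, hiY, hmax⟩, Finset.mem_insert_self _ _,
      Finset.Subset.refl _, ?_⟩
    intro k hk Z _ hZ e
    exact hZ.2.1 (e ▸ hYS (hMY hk))
  rcases new_copy hF.1 _ (hF.2 _ hS) with h | h
  · obtain ⟨B, hB, C, hC, D, hD, b, c, d, i1, i2, i3⟩ := h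
    exact (no_three hF.1 hYF hB hC hD (hYS.trans b.1) (hYS.trans c.1) (hYS.trans d.1)
      i1 i2 i3).elim
  · obtain ⟨A, hA, B, hB, C, hC, aS, aB, aC, iSB, iSC, iBC⟩ := h
    have key : ∀ X ∈ F, Incomp (insert i Y) X → Incomp Y X := by
      intro X hX hi
      refine ⟨fun hs => ?_, fun hs => hi.2 (hs.trans hYS)⟩
      have hss : Y ⊂ X := ⟨hs, fun h => hi.2 (h.trans hYS)⟩
      exact hi.1 (Finset.insert_subset (hmax X hX hss) hs)
    have iYB := key B hB iSB
    have iYC := key C hC iSC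
    refine ⟨A, hA, Y, hMY, ⟨hYF, hiY, hmax⟩, ?_, aS.1, ?_⟩
    · by_contra hiA
      have hAY : A ⊆ Y := (Finset.subset_insert_iff_of_notMem hiA).1 aS.1
      exact no_three hF.1 hA hYF hB hC hAY aB.1 aC.1 iYB iYC iBC
    · intro k hk Z hMZ hZ e
      subst e
      have up : ∀ X ∈ F, A ⊂ X → M ⊆ X := by
        intro X hX hs x hx
        by_cases e : x = k
        · rw [e]
          exact hZ.2.2 X hX hs
        · exact hs.1 (hMZ (Finset.mem_erase.2 ⟨e, hx⟩))
      exact no_three hF.1 hM hYF hB hC hMY (up B hB aB) (up C hC aC) iYB iYC iBC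

theorem stmt_10 (n : ℕ) (F : Finset (Finset (Fin n))) (hF : V3Saturated F) :
    (n : ℝ) / 2 ≤ F.card := by
  classical
  have hne : F.Nonempty := by
    rw [Finset.nonempty_iff_ne_empty]
    intro e
    subst e
    rcases new_copy hF.1 _ (hF.2 ∅ (Finset.notMem_empty _)) with h | h
    · obtain ⟨B, hB, -⟩ := h
      exact Finset.notMem_empty _ hB
    · obtain ⟨B, hB, -⟩ := h
      exact Finset.notMem_empty _ hB
  obtain ⟨M, hMin⟩ := F.exists_minimal hne
  have hM : M ∈ F := hMin.1
  have hmin : ∀ Z ∈ F, ¬ Z ⊂ M := fun Z hZ h => h.2 (hMin.2 hZ h.1)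
  have hin : ∀ k : Fin n, ∃ Y, k ∈ M → M.erase k ⊆ Y ∧ MaxAvoid F k Y := by
    intro k
    by_cases hk : k ∈ M
    · obtain ⟨Y, hY⟩ := inside hF hM hmin hk
      exact ⟨Y, fun _ => hY⟩
    · exact ⟨∅, fun h => absurd h hk⟩
  choose g hg using hin
  have hout : ∀ i : Fin n, ∃ A Y, i ∉ M → A ∈ F ∧ M ⊆ Y ∧ MaxAvoid F i Y ∧ i ∈ A ∧
      A ⊆ insert i Y ∧ ∀ k ∈ M, ∀ Z, M.erase k ⊆ Z → MaxAvoid F k Z → A ≠ Z := by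
    intro i
    by_cases hi : i ∈ M
    · exact ⟨∅, ∅, fun h => absurd hi h⟩
    · obtain ⟨A, hA, Y, hY⟩ := outside hF hM hi
      exact ⟨A, Y, fun _ => ⟨hA, hY⟩⟩
  choose a y hay using hout
  let f : Fin n → Finset (Fin n) := fun i => if i ∈ M then g i else a i
  have fin : ∀ i, i ∈ M → f i = g i := fun i h => if_pos h
  have fout : ∀ i, i ∉ M → f i = a i := fun i h => if_neg h
  have hmaps : ∀ i ∈ (Finset.univ : Finset (Fin n)), f i ∈ F := by
    intro i _
    by_cases hi : i ∈ M
    · rw [fin i hi]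
      exact (hg i hi).2.1
    · rw [fout i hi]
      exact (hay i hi).1
  have hmix : ∀ i j, i ∈ M → f i = f j → i = j := by
    intro i j hi e
    by_cases hj : j ∈ M
    · rw [fin i hi, fin j hj] at e
      by_contra hne
      exact (hg j hj).2.2.1 (e ▸ (hg i hi).1 (Finset.mem_erase.2 ⟨Ne.symm hne, hj⟩))
    · rw [fin i hi, fout j hj] at e
      exact absurd e.symm ((hay j hj).2.2.2.2.2 i hi _ (hg i hi).1 (hg i hi).2)
  have hsub : ∀ i j, i ∉ M → j ∉ M → f i = f j → i ≠ j → ¬ y i ⊆ y j := by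
    intro i j hi hj e hne hs
    rw [fout i hi, fout j hj] at e
    have hja : j ∈ a i := e ▸ (hay j hj).2.2.2.1
    rcases Finset.mem_insert.1 ((hay i hi).2.2.2.2.1 hja) with h | h
    · exact hne h.symm
    · exact (hay j hj).2.2.1.2.1 (hs h)
  have hfib : ∀ b ∈ F, (Finset.univ.filter (fun i => f i = b)).card ≤ 2 := by
    intro b _
    by_contra! h
    obtain ⟨i, j, l, hi, hj, hl, hij, hil, hjl⟩ := Finset.two_lt_card_iff.1 h
    have ei := (Finset.mem_filter.1 hi).2
    have ej := (Finset.mem_filter.1 hj).2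
    have el := (Finset.mem_filter.1 hl).2
    have mi : i ∉ M := fun h => hij (hmix i j h (ei.trans ej.symm))
    have mj : j ∉ M := fun h => hjl (hmix j l h (ej.trans el.symm))
    have ml : l ∉ M := fun h => hil (hmix l i h (el.trans ei.symm)).symm
    have inc : ∀ p q, p ∉ M → q ∉ M → f p = b → f q = b → p ≠ q → Incomp (y p) (y q) :=
      fun p q hp hq ep eq hne => ⟨hsub p q hp hq (ep.trans eq.symm) hne,
        hsub q p hq hp (eq.trans ep.symm) hne.symm⟩
    exact no_three hF.1 hM (hay i mi).2.2.1.1 (hay j mj).2.2.1.1 (hay l ml).2.2.1.1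
      (hay i mi).2.1 (hay j mj).2.1 (hay l ml).2.1
      (inc i j mi mj ei ej hij) (inc i l mi ml ei el hil) (inc j l mj ml ej el hjl)
  have hcard := Finset.card_le_mul_card_image_of_maps_to hmaps 2 hfib
  rw [Finset.card_univ, Fintype.card_fin] at hcard
  have : (n : ℝ) ≤ 2 * F.card := by exact_mod_cast hcard
  linarith
end
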